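/- arXiv:2111.07855 — 4 statements merged into one kernel-verified Lean document; each statement's English description precedes it below -/
import Mathlib

section
/- Let d ≥ 1, b ∈ ℝ, and a ∈ ℝ^d with 0 ≤ a_1 ≤ a_2 ≤ … ≤ a_d. Then the convex hull of F equals the set of all (θ, x) ∈ ℝ × [0,1]^d satisfying θ ≥ a_{i_1} x_{i_1} + ∑_{k=2}^m (a_{i_k} − a_{i_{k−1}}) x_{i_k} + b for every finite increasing sequence of indices 1 ≤ i_1 < i_2 < … < i_m = d. -/
/-!
The mixing form of an index sequence `i₁ < ⋯ < i_m` is monotone, and it telescopes to `a i_k` on the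
initial segment `{i₁, …, i_k}`. Both inclusions compare 0/1 vectors with initial segments.

Validity: restrict a 0/1 vector to the sequence. If its last `1` is at `i_k`, it lies below the
`k`-th initial segment, so its mixing form is at most `a i_k`, which the mixing set bounds by
`θ - b`.

Sufficiency: given `(θ, x)`, apply the inequality of the right-to-left records of `x`. The point `x`
is a convex combination of indicators of its superlevel sets. Since `x` decreases along its records,
such an indicator restricts to an initial segment; and when it contains `j`, it contains a record
`i ≥ j`, so its mixing form is at least `a j`. Lifting each indicator by its mixing form plus the
constant `θ - mixing form of x ≥ b` therefore lands in the mixing set, and the lifts average to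
`(θ, x)`.
-/

section Definitions

variable {𝕜 ι : Type*} [CommRing 𝕜]

/-- The mixing form `z ↦ c₀ z₀ + ∑ₖ (cₖ₊₁ - cₖ) zₖ₊₁`, the linear part of a mixing inequality; `c`
and `z` are the restrictions of the coefficients and of the point to the index sequence. -/
def mixingForm {m : ℕ} (c : Fin (m + 1) → 𝕜) : (Fin (m + 1) → 𝕜) →ₗ[𝕜] 𝕜 :=
  c 0 • LinearMap.proj 0 + ∑ k : Fin m, (c k.succ - c k.castSucc) • LinearMap.proj k.succ

/-- The mixing set of pairs `(θ, x)` with `x` a 0/1 vector and `θ ≥ aᵢ xᵢ + b` for all `i`. -/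
def mixingSet [LE 𝕜] (a : ι → 𝕜) (b : 𝕜) : Set (𝕜 × (ι → 𝕜)) :=
  {p | (∀ i, p.2 i = 0 ∨ p.2 i = 1) ∧ ∀ i, a i * p.2 i + b ≤ p.1}

/-- The polyhedron cut out by the box constraints and by the mixing inequalities of all strictly
increasing index sequences that end at the maximal index. -/
def mixingPolyhedron [LE 𝕜] [Preorder ι] (a : ι → 𝕜) (b : 𝕜) : Set (𝕜 × (ι → 𝕜)) :=
  {p | (∀ i, 0 ≤ p.2 i ∧ p.2 i ≤ 1) ∧ ∀ (m : ℕ) (s : Fin (m + 1) → ι), StrictMono s →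
    IsMax (s (Fin.last m)) → mixingForm (a ∘ s) (p.2 ∘ s) + b ≤ p.1}

end Definitions

section MixingForm

variable {𝕜 : Type*} [CommRing 𝕜] {m : ℕ} {c z : Fin (m + 1) → 𝕜}

lemma mixingForm_apply (c z : Fin (m + 1) → 𝕜) :
    mixingForm c z = c 0 * z 0 + ∑ k : Fin m, (c k.succ - c k.castSucc) * z k.succ := by
  simp [mixingForm]

lemma mixingForm_indicator_Iic (c : Fin (m + 1) → 𝕜) (k : Fin (m + 1)) :
    mixingForm c ((Set.Iic k).indicator 1) = c k := by
  rw [mixingForm_apply]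
  cases k using Fin.cases with
  | zero => simp
  | succ k =>
    have hsum : ∑ l : Fin _, (c l.succ - c l.castSucc) * (Set.Iic k.succ).indicator 1 l.succ =
        ∑ l ∈ Finset.Iic k, (c l.succ - c l.castSucc) := by
      simp [Set.indicator_apply, ← Finset.sum_filter, ← Finset.filter_ge_eq_Iic]
    rw [hsum, Fin.sum_Iic_sub]
    simp

variable [PartialOrder 𝕜] [IsOrderedRing 𝕜]

lemma monotone_mixingForm (hc : Monotone c) (hc₀ : 0 ≤ c 0) : Monotone (mixingForm c) := by
  intro z w hzw
  simp only [mixingForm_apply]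
  gcongr with k
  · exact hzw 0
  · exact sub_nonneg.2 (hc k.castSucc_lt_succ.le)
  · exact hzw k.succ

lemma mixingForm_le_of_forall_mul_le (hc : Monotone c) (hc₀ : 0 ≤ c 0)
    (hz : ∀ k, z k = 0 ∨ z k = 1) {B : 𝕜} (hB : ∀ k, c k * z k ≤ B) : mixingForm c z ≤ B := by
  obtain hzero | hone := {k | z k = 1}.eq_empty_or_nonempty
  · have hz₀ : z = 0 := funext fun k =>
      (hz k).resolve_right (Set.eq_empty_iff_forall_notMem.1 hzero k)
    simpa [hz₀] using hB 0
  · obtain ⟨k, hk, hlast⟩ := Set.exists_max_image {k | z k = 1} id (Set.toFinite _) hone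
    have hle : z ≤ (Set.Iic k).indicator 1 := fun l =>
      Set.le_indicator_apply (fun _ => by obtain h | h := hz l <;> simp [h])
        fun hl => ((hz l).resolve_right fun h => hl (hlast l h)).le
    calc mixingForm c z ≤ c k := by
          simpa only [mixingForm_indicator_Iic] using monotone_mixingForm hc hc₀ hle
      _ = c k * z k := by rw [show z k = 1 from hk, mul_one]
      _ ≤ B := hB k

lemma le_mixingForm_of_eq_one (hc : Monotone c) (hc₀ : 0 ≤ c 0) (hz : 0 ≤ z) {k : Fin (m + 1)}
    (hk : ∀ l ≤ k, z l = 1) : c k ≤ mixingForm c z := by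
  have hle : (Set.Iic k).indicator 1 ≤ z :=
    Set.indicator_le' (fun l hl => (hk l hl).ge) fun l _ => hz l
  simpa only [mixingForm_indicator_Iic] using monotone_mixingForm hc hc₀ hle

end MixingForm

section ThresholdVectors

variable {𝕜 ι : Type*}

/-- The indicator vectors of the superlevel sets of `x`, of which every point `x` of the unit cube
is a convex combination. -/
def thresholdVectors [Zero 𝕜] [One 𝕜] [LE 𝕜] (x : ι → 𝕜) : Set (ι → 𝕜) :=
  Set.range fun t => {i | t ≤ x i}.indicator 1

variable [Field 𝕜] [LinearOrder 𝕜] [IsStrictOrderedRing 𝕜]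

lemma thresholdVectors_min_div_subset {x : ι → 𝕜} (hx : ∀ i, x i ≤ 1) {v : 𝕜} (hv : 0 < v) :
    thresholdVectors (fun i => min (x i / v) 1) ⊆ thresholdVectors x := by
  rintro _ ⟨t, rfl⟩
  obtain ht | ht := le_or_gt t 1
  · refine ⟨t * v, ?_⟩
    simp [le_div_iff₀ hv, ht]
  · refine ⟨2, ?_⟩
    have hsub : ∀ i, ¬ 2 ≤ x i := fun i h => by linarith [hx i]
    simp [hsub, ht.not_ge]

lemma smul_min_div_add_smul_indicator {x : ι → 𝕜} {v : 𝕜} (hx : ∀ i, x i ≤ 1) (hv₀ : 0 < v)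
    (hv₁ : v ≤ 1) (hmax : ∀ i, x i < 1 → x i ≤ v) :
    v • (fun i => min (x i / v) 1) + (1 - v) • {i | 1 ≤ x i}.indicator 1 = x := by
  ext i
  obtain hone | hlt := (hx i).eq_or_lt
  · have hmin : min v⁻¹ 1 = 1 := min_eq_right ((one_le_inv₀ hv₀).2 hv₁)
    simp [hmin, hone]
  · have hmin : min (x i / v) 1 = x i / v := min_eq_left ((div_le_one hv₀).2 (hmax i hlt))
    simp [hmin, hlt.not_ge, mul_div_cancel₀ _ hv₀.ne']

-- Induction on the number of fractional coordinates: if `v` is the largest fractional value, then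
-- the coordinates with value `v` become integral in `min (x / v) 1`.
lemma mem_convexHull_thresholdVectors [Finite ι] (x : ι → 𝕜) (hx : ∀ i, 0 ≤ x i ∧ x i ≤ 1) :
    x ∈ convexHull 𝕜 (thresholdVectors x) := by
  induction hn : {i | 0 < x i ∧ x i < 1}.ncard using Nat.strong_induction_on generalizing x with
  | _ n ih =>
  have hones : {i | 1 ≤ x i}.indicator 1 ∈ convexHull 𝕜 (thresholdVectors x) :=
    subset_convexHull 𝕜 _ ⟨1, rfl⟩
  obtain hnone | hfrac := {i | 0 < x i ∧ x i < 1}.eq_empty_or_nonempty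
  · have hx_ones : {i | 1 ≤ x i}.indicator 1 = x := by
      ext i
      obtain hzero | hpos := (hx i).1.eq_or_lt
      · simp [← hzero]
      · have hone : x i = 1 := (hx i).2.eq_of_not_lt fun hlt => hnone.le ⟨hpos, hlt⟩
        simp [hone]
    rwa [hx_ones] at hones
  obtain ⟨i₀, ⟨hv₀, hv₁⟩, hmax⟩ := Set.exists_max_image _ x (Set.toFinite _) hfrac
  have hfewer : {i | 0 < min (x i / x i₀) 1 ∧ min (x i / x i₀) 1 < 1}.ncard < n := by
    rw [← hn]
    refine Set.ncard_lt_ncard (Set.ssubset_iff_exists.2 ⟨fun i hi => ?_, i₀, ⟨hv₀, hv₁⟩, ?_⟩)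
    · have hpos : 0 < x i := (div_pos_iff_of_pos_right hv₀).1 (lt_min_iff.1 hi.1).1
      have hlt : x i < x i₀ := (div_lt_one hv₀).1 ((min_lt_iff.1 hi.2).resolve_right (lt_irrefl 1))
      exact ⟨hpos, hlt.trans hv₁⟩
    · simp [div_self hv₀.ne']
  have hscaled : (fun i => min (x i / x i₀) 1) ∈ convexHull 𝕜 (thresholdVectors x) :=
    convexHull_mono (thresholdVectors_min_div_subset (fun i => (hx i).2) hv₀) <|
      ih _ hfewer _ (fun i =>
        ⟨le_min (div_nonneg (hx i).1 hv₀.le) zero_le_one, min_le_right _ _⟩) rfl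
  have hle : ∀ i, x i < 1 → x i ≤ x i₀ := fun i hi =>
    (hx i).1.eq_or_lt.elim (fun h => h ▸ hv₀.le) fun h => hmax i ⟨h, hi⟩
  have hcomb :=
    convex_convexHull 𝕜 _ hscaled hones hv₀.le (sub_nonneg.2 hv₁.le) (add_sub_cancel _ _)
  rwa [smul_min_div_add_smul_indicator (fun i => (hx i).2) hv₀ hv₁.le hle] at hcomb

end ThresholdVectors

section Records

variable {α ι : Type*}

/-- The right-to-left records of `x`: the indices whose value exceeds all later values. Their
mixing inequality is the one that certifies membership of a point `(θ, x)` in the convex hull. -/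
def records [LT α] [LT ι] (x : ι → α) : Set ι :=
  {i | ∀ j, i < j → x j < x i}

lemma strictAntiOn_records [Preorder α] [Preorder ι] (x : ι → α) : StrictAntiOn x (records x) :=
  fun _ hi _ _ hij => hi _ hij

variable [LinearOrder ι] [Finite ι]

lemma exists_mem_records_ge [LinearOrder α] (x : ι → α) (j : ι) :
    ∃ i ∈ records x, j ≤ i ∧ x j ≤ x i := by
  obtain ⟨i, ⟨hji, hxi⟩, hlast⟩ :=
    Set.exists_max_image {i | j ≤ i ∧ x j ≤ x i} id (Set.toFinite _) ⟨j, le_rfl, le_rfl⟩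
  refine ⟨i, fun l hil => ?_, hji, hxi⟩
  by_contra! hle
  exact (hlast l ⟨hji.trans hil.le, hxi.trans hle⟩).not_gt hil

lemma exists_strictMono_range_eq {S : Set ι} (hS : S.Nonempty) :
    ∃ (m : ℕ) (s : Fin (m + 1) → ι), StrictMono s ∧ Set.range s = S := by
  obtain ⟨S, rfl⟩ := S.toFinite.exists_finset_coe
  obtain ⟨m, hm⟩ := Nat.exists_eq_succ_of_ne_zero (Finset.card_ne_zero.2 (Finset.coe_nonempty.1 hS))
  exact ⟨m, S.orderEmbOfFin hm, (S.orderEmbOfFin hm).strictMono, S.range_orderEmbOfFin hm⟩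

lemma exists_strictMono_range_eq_records [Preorder α] [Nonempty ι] (x : ι → α) :
    ∃ (m : ℕ) (s : Fin (m + 1) → ι),
      StrictMono s ∧ IsMax (s (Fin.last m)) ∧ Set.range s = records x := by
  obtain ⟨i, hi⟩ := Finite.exists_max (id : ι → ι)
  have hi_mem : i ∈ records x := fun j hij => absurd (hi j) hij.not_ge
  obtain ⟨m, s, hs, hrange⟩ := exists_strictMono_range_eq ⟨i, hi_mem⟩
  obtain ⟨k, rfl⟩ := hrange.ge hi_mem
  exact ⟨m, s, hs, fun j _ => (hi j).trans (hs.monotone (Fin.le_last k)), hrange⟩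

end Records

section ConvexHull

variable {𝕜 ι : Type*} {a : ι → 𝕜}

section Validity

variable [CommRing 𝕜] [PartialOrder 𝕜] [IsOrderedRing 𝕜] [Preorder ι]

lemma convex_mixingPolyhedron (a : ι → 𝕜) (b : 𝕜) : Convex 𝕜 (mixingPolyhedron a b) := by
  rintro p ⟨hp_box, hp⟩ q ⟨hq_box, hq⟩ u v hu hv huv
  refine ⟨fun i => convex_Icc (0 : 𝕜) 1 (hp_box i) (hq_box i) hu hv huv, fun m s hs hlast => ?_⟩
  have hform : mixingForm (a ∘ s) ((u • p + v • q).2 ∘ s) =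
      u * mixingForm (a ∘ s) (p.2 ∘ s) + v * mixingForm (a ∘ s) (q.2 ∘ s) := by
    change mixingForm (a ∘ s) (u • (p.2 ∘ s) + v • (q.2 ∘ s)) = _
    simp only [map_add, map_smul, smul_eq_mul]
  calc mixingForm (a ∘ s) ((u • p + v • q).2 ∘ s) + b
      = u * (mixingForm (a ∘ s) (p.2 ∘ s) + b) + v * (mixingForm (a ∘ s) (q.2 ∘ s) + b) := by
        rw [hform]; linear_combination (-b) * huv
    _ ≤ u * p.1 + v * q.1 := by gcongr <;> solve_by_elim

lemma mixingSet_subset_mixingPolyhedron (ha₀ : 0 ≤ a) (ha : Monotone a) (b : 𝕜) :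
    mixingSet a b ⊆ mixingPolyhedron a b := by
  rintro ⟨θ, x⟩ ⟨hx, hθ⟩
  refine ⟨fun i => ?_, fun m s hs _ => le_sub_iff_add_le.1 ?_⟩
  · obtain h | h := hx i <;> rw [h] <;> simp
  · exact mixingForm_le_of_forall_mul_le (ha.comp hs.monotone) (ha₀ _) (fun k => hx (s k))
      fun k => le_sub_iff_add_le.2 (hθ (s k))

end Validity

section Sufficiency

variable [LinearOrder 𝕜] [LinearOrder ι] [Finite ι]

lemma mul_le_mixingForm_of_mem_thresholdVectors [CommRing 𝕜] [IsOrderedRing 𝕜]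
    (ha₀ : 0 ≤ a) (ha : Monotone a) {x y : ι → 𝕜} {m : ℕ} {s : Fin (m + 1) → ι} (hs : StrictMono s)
    (hrange : Set.range s = records x) (hy : y ∈ thresholdVectors x) (j : ι) :
    a j * y j ≤ mixingForm (a ∘ s) (y ∘ s) := by
  obtain ⟨t, rfl⟩ := hy
  set y : ι → 𝕜 := {i | t ≤ x i}.indicator 1
  have hy₀ : 0 ≤ y := Set.indicator_nonneg fun _ _ => zero_le_one
  have hc : Monotone (a ∘ s) := ha.comp hs.monotone
  by_cases hj : t ≤ x j
  · obtain ⟨i, hi, hji, hxi⟩ := exists_mem_records_ge x j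
    obtain ⟨k, rfl⟩ := hrange.ge hi
    have hone : ∀ l ≤ k, y (s l) = 1 := fun l hl =>
      Set.indicator_of_mem (hj.trans (hxi.trans ((strictAntiOn_records x).antitoneOn
        (hrange.le ⟨l, rfl⟩) hi (hs.monotone hl)))) 1
    calc a j * y j = a j := by simp [y, hj]
      _ ≤ a (s k) := ha hji
      _ ≤ mixingForm (a ∘ s) (y ∘ s) :=
        le_mixingForm_of_eq_one hc (ha₀ _) (fun k => hy₀ (s k)) hone
  · calc a j * y j = mixingForm (a ∘ s) 0 := by simp [y, hj]
      _ ≤ mixingForm (a ∘ s) (y ∘ s) := monotone_mixingForm hc (ha₀ _) fun k => hy₀ (s k)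

lemma mixingPolyhedron_subset_convexHull_mixingSet [Field 𝕜] [IsStrictOrderedRing 𝕜]
    [Nonempty ι] (ha₀ : 0 ≤ a) (ha : Monotone a) (b : 𝕜) :
    mixingPolyhedron a b ⊆ convexHull 𝕜 (mixingSet a b) := by
  rintro ⟨θ, x⟩ ⟨hx, hθ⟩
  obtain ⟨m, s, hs, hlast, hrange⟩ := exists_strictMono_range_eq_records x
  let form : (ι → 𝕜) →ₗ[𝕜] 𝕜 := mixingForm (a ∘ s) ∘ₗ LinearMap.funLeft 𝕜 𝕜 s
  let lift : (ι → 𝕜) →ᵃ[𝕜] 𝕜 × (ι → 𝕜) :=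
    (form.toAffineMap + AffineMap.const 𝕜 _ (θ - form x)).prod (AffineMap.id 𝕜 _)
  have hslack : b ≤ θ - form x := le_sub_iff_add_le'.2 (hθ m s hs hlast)
  have hlift : lift '' thresholdVectors x ⊆ mixingSet a b := by
    rintro _ ⟨y, hy, rfl⟩
    refine ⟨?_, fun j => ?_⟩
    · obtain ⟨t, rfl⟩ := hy
      exact fun i => Set.indicator_eq_zero_or_self _ _ i
    · exact add_le_add (mul_le_mixingForm_of_mem_thresholdVectors ha₀ ha hs hrange hy j) hslack
  have hlift_x : lift x = (θ, x) := by simp [lift]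
  rw [← hlift_x]
  refine convexHull_mono hlift ?_
  rw [← lift.image_convexHull]
  exact Set.mem_image_of_mem lift (mem_convexHull_thresholdVectors x hx)

end Sufficiency

end ConvexHull

theorem stmt6_general {𝕜 ι : Type*} [Field 𝕜] [LinearOrder 𝕜] [IsStrictOrderedRing 𝕜]
    [LinearOrder ι] [Finite ι] [Nonempty ι] {a : ι → 𝕜} (ha₀ : 0 ≤ a) (ha : Monotone a) (b : 𝕜) :
    convexHull 𝕜 (mixingSet a b) = mixingPolyhedron a b :=
  (convexHull_min (mixingSet_subset_mixingPolyhedron ha₀ ha b)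
    (convex_mixingPolyhedron a b)).antisymm
    (mixingPolyhedron_subset_convexHull_mixingSet ha₀ ha b)

/-- The convex hull of the mixing set
`F = {(θ,x) ∈ ℝ × {0,1}^d : θ ≥ a_i x_i + b ∀i}` (with `0 ≤ a_1 ≤ … ≤ a_d`) is described by
the box constraints together with all mixing inequalities indexed by increasing sequences of
indices ending at the last index. -/
theorem stmt6 (d : ℕ) (hd : 1 ≤ d) (b : ℝ) (a : Fin d → ℝ)
    (hnonneg : ∀ i, 0 ≤ a i) (hmono : Monotone a) :
    convexHull ℝ {p : ℝ × (Fin d → ℝ) |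
        (∀ i, p.2 i = 0 ∨ p.2 i = 1) ∧ ∀ i, p.1 ≥ a i * p.2 i + b}
    = {p : ℝ × (Fin d → ℝ) | (∀ i, 0 ≤ p.2 i ∧ p.2 i ≤ 1) ∧
        ∀ (m : ℕ) (idx : Fin (m + 1) → Fin d), StrictMono idx →
          ((idx (Fin.last m) : ℕ) = d - 1) →
          p.1 ≥ a (idx 0) * p.2 (idx 0)
            + (∑ k : Fin m, (a (idx k.succ) - a (idx k.castSucc)) * p.2 (idx k.succ)) + b} := by
  obtain ⟨n, rfl⟩ := Nat.exists_eq_add_of_le' hd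
  simpa [mixingSet, mixingPolyhedron, mixingForm_apply, Fin.ext_iff, Fin.top_eq_last] using
    stmt6_general hnonneg hmono b
end

section
/- Let d ≥ 1, b ∈ ℝ, and a ∈ ℝ^d with 0 ≤ a_1 ≤ a_2 ≤ … ≤ a_d. Let x ∈ {0,1}^d and θ ∈ ℝ satisfy θ ≥ a_i x_i + b for all i ∈ {1,…,d}. Then for every finite increasing sequence of indices 1 ≤ i_1 < i_2 < … < i_m = d, the mixing inequality holds: θ ≥ a_{i_1} x_{i_1} + ∑_{k=2}^m (a_{i_k} − a_{i_{k−1}}) x_{i_k} + b. -/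
/-!
Among the selected indices let `K` be the last one with `x_K = 1`; if there is none, the sum is
zero, and so is every `a_i x_i`. The terms after `K` vanish and, as `a` is nonnegative and monotone,
raising every earlier `x_i` to `1` does not decrease the sum, which then telescopes to
`a_K = a_K x_K`. So the sum is at most one of the products `a_i x_i`, each of which is bounded by
`θ - b`.
-/

section MixingSum

variable {R : Type*} [Ring R] {m : ℕ}

/-- The `x`-dependent part `c₀ y₀ + ∑ₖ (cₖ - cₖ₋₁) yₖ` of a mixing inequality, where `c` and `y`
are the restrictions of `a` and `x` to the selected indices, renumbered from `0` to `m`. -/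
def mixingSum (c y : Fin (m + 1) → R) : R :=
  c 0 * y 0 + ∑ k : Fin m, (c k.succ - c k.castSucc) * y k.succ

lemma mixingSum_succ (c y : Fin (m + 2) → R) :
    mixingSum c y = mixingSum (c ∘ Fin.castSucc) (y ∘ Fin.castSucc) +
      (c (Fin.last (m + 1)) - c (Fin.last m).castSucc) * y (Fin.last (m + 1)) := by
  simp only [mixingSum, Fin.sum_univ_castSucc, Function.comp_apply, Fin.succ_castSucc,
    Fin.succ_last, Fin.castSucc_zero, add_assoc]

lemma mixingSum_one (c : Fin (m + 1) → R) : mixingSum c 1 = c (Fin.last m) := by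
  induction m with
  | zero => simp [mixingSum]
  | succ m ih =>
    rw [mixingSum_succ, Pi.one_comp, ih, Function.comp_apply, Pi.one_apply, mul_one,
      add_sub_cancel]

variable [PartialOrder R] [IsOrderedRing R]

lemma monotone_mixingSum {c : Fin (m + 1) → R} (hc₀ : 0 ≤ c 0) (hc : Monotone c) :
    Monotone (mixingSum c) := fun _ _ hyz ↦
  add_le_add (mul_le_mul_of_nonneg_left (hyz 0) hc₀) <| Finset.sum_le_sum fun k _ ↦
    mul_le_mul_of_nonneg_left (hyz k.succ) (sub_nonneg.2 (hc k.castSucc_le_succ))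

lemma mixingSum_le_last {c y : Fin (m + 1) → R} (hc₀ : 0 ≤ c 0) (hc : Monotone c) (hy : y ≤ 1) :
    mixingSum c y ≤ c (Fin.last m) :=
  (monotone_mixingSum hc₀ hc hy).trans_eq (mixingSum_one c)

lemma exists_mixingSum_le_mul {c y : Fin (m + 1) → R} (hc₀ : 0 ≤ c 0) (hc : Monotone c)
    (hy : ∀ k, y k = 0 ∨ y k = 1) : ∃ k, mixingSum c y ≤ c k * y k := by
  induction m with
  | zero => exact ⟨0, by simp [mixingSum]⟩
  | succ m ih =>
    rcases hy (Fin.last (m + 1)) with hlast | hlast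
    · obtain ⟨k, hk⟩ := ih (c := c ∘ Fin.castSucc) (y := y ∘ Fin.castSucc) hc₀
        (hc.comp Fin.strictMono_castSucc.monotone) fun k ↦ hy k.castSucc
      refine ⟨k.castSucc, ?_⟩
      rwa [mixingSum_succ, hlast, mul_zero, add_zero]
    · have hy_le : y ≤ 1 := fun k ↦ (hy k).elim (fun h ↦ h.trans_le zero_le_one) le_of_eq
      refine ⟨Fin.last (m + 1), ?_⟩
      rw [hlast, mul_one]
      exact mixingSum_le_last hc₀ hc hy_le

theorem stmt7_general {c y : Fin (m + 1) → R} {b θ : R} (hc₀ : 0 ≤ c 0) (hc : Monotone c)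
    (hy : ∀ k, y k = 0 ∨ y k = 1) (hθ : ∀ k, c k * y k + b ≤ θ) : mixingSum c y + b ≤ θ :=
  have ⟨k, hk⟩ := exists_mixingSum_le_mul hc₀ hc hy
  (add_le_add_left hk b).trans (hθ k)

end MixingSum

/-- Validity of the mixing inequalities: any `(θ, x)` with `x ∈ {0,1}^d` and
`θ ≥ a_i x_i + b` for all `i` satisfies every mixing inequality indexed by an increasing
sequence of indices ending at the last index. -/
theorem stmt7 (d : ℕ) (hd : 1 ≤ d) (b : ℝ) (a : Fin d → ℝ)
    (hnonneg : ∀ i, 0 ≤ a i) (hmono : Monotone a)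
    (x : Fin d → ℝ) (hx : ∀ i, x i = 0 ∨ x i = 1)
    (θ : ℝ) (hθ : ∀ i, θ ≥ a i * x i + b) :
    ∀ (m : ℕ) (idx : Fin (m + 1) → Fin d), StrictMono idx →
      ((idx (Fin.last m) : ℕ) = d - 1) →
      θ ≥ a (idx 0) * x (idx 0)
        + (∑ k : Fin m, (a (idx k.succ) - a (idx k.castSucc)) * x (idx k.succ)) + b := by
  intro m idx hidx _
  exact stmt7_general (hnonneg _) (hmono.comp hidx.monotone) (fun k ↦ hx (idx k))
    fun k ↦ hθ (idx k)
end

section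
/- Let G = (V, E) be a finite simple undirected graph and let k be a nonnegative integer. Then G has a vertex cover of size at most k (i.e., a set C ⊆ V with |C| ≤ k such that every edge of G has at least one endpoint in C) if and only if there exist x ∈ {0,1}^V and θ ∈ ℝ such that θ ≥ −1, θ ≥ −x_u − x_v for every edge {u,v} ∈ E, and ∑_{v∈V} x_v + (k+1)θ ≤ −1. -/
/-!
A cover `C` yields its indicator vector together with `θ = -1`, where the budget inequality reads
`#C ≤ k`. Conversely, a binary `x` is the indicator vector of a set `C`. Lowering `θ` to `-1`
preserves the budget inequality, so `#C ≤ k`; the same inequality forces `θ < 0`, so no edge has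
both endpoint values `0` and `C` is a cover.
-/

open Finset

section Indicator

variable {α R : Type*}

lemma forall_eq_zero_or_one_iff_exists_indicator [Zero R] [One R] {f : α → R} :
    (∀ a, f a = 0 ∨ f a = 1) ↔ ∃ s : Set α, f = s.indicator 1 := by
  classical
  constructor
  · intro hf
    refine ⟨{a | f a = 1}, funext fun a ↦ ?_⟩
    rcases hf a with h | h <;> simp +contextual [Set.indicator_apply, h]
  · rintro ⟨s, rfl⟩ a
    exact Set.indicator_eq_zero_or_self s 1 a

lemma sum_indicator_one_eq_card [Fintype α] [AddCommMonoidWithOne R] (s : Finset α) :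
    ∑ a, (s : Set α).indicator (1 : α → R) a = #s := by
  rw [sum_indicator_subset _ s.subset_univ]
  simp

end Indicator

section VertexCover

variable {V R : Type*} [Ring R] [LinearOrder R] [IsStrictOrderedRing R] {G : SimpleGraph V}

lemma isVertexCover_iff_forall_neg_indicator_sub_le {C : Set V} {θ : R}
    (hθ : -1 ≤ θ) (hθ₀ : θ < 0) :
    G.IsVertexCover C ↔ ∀ u v, G.Adj u v → -C.indicator 1 u - C.indicator 1 v ≤ θ := by
  have hθ₂ : -1 - 1 ≤ θ := (sub_le_self _ zero_le_one).trans hθ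
  refine forall₃_congr fun u v _ ↦ ?_
  by_cases hu : u ∈ C <;> by_cases hv : v ∈ C <;> simp [hu, hv, hθ, hθ₀, hθ₂]

variable (R) in
lemma card_le_and_isVertexCover_iff_exists {C : Finset V} {k : ℕ} :
    #C ≤ k ∧ G.IsVertexCover C ↔ ∃ θ : R, -1 ≤ θ ∧
      (∀ u v, G.Adj u v → -(C : Set V).indicator 1 u - (C : Set V).indicator 1 v ≤ θ) ∧
      #C + (k + 1) * θ ≤ -1 := by
  have hbudget_neg_one : (#C : R) + (k + 1) * -1 ≤ -1 ↔ #C ≤ k := by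
    rw [← Nat.cast_le (α := R)]
    grind
  constructor
  · rintro ⟨hcard, hcover⟩
    exact ⟨-1, le_rfl,
      (isVertexCover_iff_forall_neg_indicator_sub_le le_rfl neg_one_lt_zero).1 hcover,
      hbudget_neg_one.2 hcard⟩
  · rintro ⟨θ, hθ, hedge, hbudget⟩
    have hk : (0 : R) ≤ k + 1 := by positivity
    have hcard : #C ≤ k := hbudget_neg_one.1 <| hbudget.trans' <| by gcongr
    have hmul : (k + 1) * θ < 0 :=
      calc (k + 1) * θ ≤ #C + (k + 1) * θ := le_add_of_nonneg_left (Nat.cast_nonneg _)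
        _ ≤ -1 := hbudget
        _ < 0 := neg_one_lt_zero
    have hθ₀ : θ < 0 := neg_of_mul_neg_right hmul hk
    exact ⟨hcard, (isVertexCover_iff_forall_neg_indicator_sub_le hθ hθ₀).2 hedge⟩

end VertexCover

theorem stmt8_general {V R : Type*} [Fintype V] [Ring R] [LinearOrder R] [IsStrictOrderedRing R]
    (G : SimpleGraph V) (k : ℕ) :
    (∃ C : Finset V, #C ≤ k ∧ G.IsVertexCover C) ↔
    ∃ (x : V → R) (θ : R), (∀ v, x v = 0 ∨ x v = 1) ∧ -1 ≤ θ ∧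
      (∀ u v, G.Adj u v → -x u - x v ≤ θ) ∧ ∑ v, x v + (k + 1) * θ ≤ -1 := by
  simp_rw [forall_eq_zero_or_one_iff_exists_indicator,
    card_le_and_isVertexCover_iff_exists R, ← sum_indicator_one_eq_card]
  constructor
  · rintro ⟨C, θ, h⟩
    exact ⟨_, θ, ⟨C, rfl⟩, h⟩
  · rintro ⟨_, θ, ⟨C, rfl⟩, h⟩
    lift C to Finset V using C.toFinite
    exact ⟨C, θ, h⟩

/-- Correctness of the vertex-cover reduction: a finite simple graph `G` has a
vertex cover of size at most `k` iff there exist `x ∈ {0,1}^V` and `θ ∈ ℝ` with `θ ≥ -1`,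
`θ ≥ -x_u - x_v` for every edge `uv`, and `∑_v x_v + (k+1)θ ≤ -1`. -/
theorem stmt8 {V : Type*} [Fintype V] [DecidableEq V] (G : SimpleGraph V) (k : ℕ) :
    (∃ C : Finset V, C.card ≤ k ∧ ∀ u v : V, G.Adj u v → u ∈ C ∨ v ∈ C) ↔
    (∃ (x : V → ℝ) (θ : ℝ), (∀ v, x v = 0 ∨ x v = 1) ∧ θ ≥ -1 ∧
      (∀ u v : V, G.Adj u v → θ ≥ -x u - x v) ∧
      (∑ v, x v) + (k + 1 : ℝ) * θ ≤ -1) :=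
  stmt8_general G k
end

section
/- Let n ≥ 1, a ∈ ℝ^n with a ≥ 0 componentwise, c ∈ ℝ^n with c ≥ 0 componentwise, b ∈ ℝ, and d > 0. For x ∈ ℝ^n define Q(x) as the infimum of aᵀz + b·y over all (y, z) ∈ ℝ × ℝ^n satisfying z_i − y ≤ 0, (c_i + d)·z_i ≤ x_i, and d·(y − z_i) ≤ 1 − x_i for all i ∈ {1,…,n}, together with cᵀz + d·y = 1, z ≥ 0, and y ≥ 0. Then for every x ∈ {0,1}^n, Q(x) = (aᵀx + b)/(cᵀx + d). -/
/-!
At a binary point `x` the linear program has exactly one feasible point. If `x i = 0`, then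
`(c i + d) * z i ≤ 0` forces `z i = 0`; if `x i = 1`, then `d * (y - z i) ≤ 0` together with
`z i ≤ y` forces `z i = y`. Hence `z = y • x`, and the normalisation `cᵀz + d y = 1` gives
`y = 1 / (cᵀx + d)`. This point is feasible because `c i + d ≤ cᵀx + d` whenever `x i = 1`.
-/

theorem eq_mul_of_mul_le_of_mul_sub_le {R : Type*} [Ring R] [LinearOrder R]
    [IsStrictOrderedRing R] {p q x y z : R} (hp : 0 < p) (hq : 0 < q) (hx : x = 0 ∨ x = 1)
    (hz : 0 ≤ z) (hzy : z ≤ y) (hzx : p * z ≤ x) (hyz : q * (y - z) ≤ 1 - x) : z = y * x := by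
  rcases hx with rfl | rfl
  · rw [mul_zero]
    exact (nonpos_of_mul_nonpos_right hzx hp).antisymm hz
  · rw [sub_self] at hyz
    rw [mul_one]
    exact hzy.antisymm (sub_nonpos.mp (nonpos_of_mul_nonpos_right hyz hq))

section OrderedSemiring

variable {R ι : Type*} [Semiring R] [PartialOrder R] [IsOrderedRing R] {c x : ι → R}

theorem nonneg_of_forall_eq_zero_or_one (hx : ∀ i, x i = 0 ∨ x i = 1) : 0 ≤ x :=
  fun i => (hx i).elim (fun h => h.ge) (fun h => h.symm ▸ zero_le_one)

theorem mul_le_dotProduct [Fintype ι] (hc : 0 ≤ c) (hx : 0 ≤ x) (i : ι) :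
    c i * x i ≤ c ⬝ᵥ x :=
  Finset.single_le_sum (f := fun j => c j * x j) (fun j _ => mul_nonneg (hc j) (hx j))
    (Finset.mem_univ i)

end OrderedSemiring

/-- The feasible region, as a set of pairs `(y, z)`, of the linear program that extends the
fractional objective with denominator `cᵀx + d` from binary to arbitrary `x`. -/
def fractionalFeasibleSet {R ι : Type*} [Fintype ι] [CommRing R] [LE R] (c : ι → R) (d : R)
    (x : ι → R) : Set (R × (ι → R)) :=
  {p | (∀ i, p.2 i - p.1 ≤ 0 ∧ (c i + d) * p.2 i ≤ x i ∧ d * (p.1 - p.2 i) ≤ 1 - x i) ∧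
    c ⬝ᵥ p.2 + d * p.1 = 1 ∧ (∀ i, 0 ≤ p.2 i) ∧ 0 ≤ p.1}

namespace fractionalFeasibleSet

section OrderedRing

variable {R ι : Type*} [Fintype ι] [CommRing R] [LinearOrder R] [IsStrictOrderedRing R]
  {c x : ι → R} {d y : R}

theorem snd_eq_smul {p : R × (ι → R)} (hc : 0 ≤ c) (hd : 0 < d) (hx : ∀ i, x i = 0 ∨ x i = 1)
    (hp : p ∈ fractionalFeasibleSet c d x) : p.2 = p.1 • x := by
  obtain ⟨hbounds, -, hz, -⟩ := hp
  funext i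
  obtain ⟨hzy, hzx, hyz⟩ := hbounds i
  exact eq_mul_of_mul_le_of_mul_sub_le (add_pos_of_nonneg_of_pos (hc i) hd) hd (hx i) (hz i)
    (sub_nonpos.mp hzy) hzx hyz

theorem mk_smul_mem_iff (hc : 0 ≤ c) (hd : 0 < d) (hx : ∀ i, x i = 0 ∨ x i = 1) :
    (y, y • x) ∈ fractionalFeasibleSet c d x ↔ (c ⬝ᵥ x + d) * y = 1 := by
  have hnorm : c ⬝ᵥ (y • x) + d * y = (c ⬝ᵥ x + d) * y := by
    rw [dotProduct_smul, smul_eq_mul]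
    ring
  refine ⟨fun h => hnorm.symm.trans h.2.1, fun hDy => ?_⟩
  have hx₀ : 0 ≤ x := nonneg_of_forall_eq_zero_or_one hx
  have hcx : 0 ≤ c ⬝ᵥ x := dotProduct_nonneg_of_nonneg hc hx₀
  have hy : 0 ≤ y := nonneg_of_mul_nonneg_right (hDy.symm ▸ zero_le_one)
    (add_pos_of_nonneg_of_pos hcx hd)
  refine ⟨fun i => ?_, hnorm.trans hDy, fun i => mul_nonneg hy (hx₀ i), hy⟩
  have hcd : (c i * x i + d) * y ≤ 1 :=
    hDy ▸ mul_le_mul_of_nonneg_right (by linarith [mul_le_dotProduct hc hx₀ i]) hy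
  have hdy : d * y ≤ 1 := hDy ▸ mul_le_mul_of_nonneg_right (by linarith) hy
  simp only [Pi.smul_apply, smul_eq_mul]
  rcases hx i with hi | hi <;> rw [hi] at hcd ⊢
  all_goals exact ⟨by linarith, by linarith, by linarith⟩

end OrderedRing

variable {𝕜 ι : Type*} [Fintype ι] [Field 𝕜] [LinearOrder 𝕜] [IsStrictOrderedRing 𝕜]
  {c x : ι → 𝕜} {d : 𝕜}

theorem eq_singleton (hc : 0 ≤ c) (hd : 0 < d) (hx : ∀ i, x i = 0 ∨ x i = 1) :
    fractionalFeasibleSet c d x = {((c ⬝ᵥ x + d)⁻¹, (c ⬝ᵥ x + d)⁻¹ • x)} := by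
  have hD : c ⬝ᵥ x + d ≠ 0 := (add_pos_of_nonneg_of_pos
    (dotProduct_nonneg_of_nonneg hc (nonneg_of_forall_eq_zero_or_one hx)) hd).ne'
  refine Set.eq_singleton_iff_unique_mem.mpr
    ⟨(mk_smul_mem_iff hc hd hx).mpr (mul_inv_cancel₀ hD), ?_⟩
  rintro ⟨y, z⟩ hp
  obtain rfl : z = y • x := snd_eq_smul hc hd hx hp
  rw [eq_inv_of_mul_eq_one_right ((mk_smul_mem_iff hc hd hx).mp hp)]

end fractionalFeasibleSet

theorem stmt17_general {𝕜 ι : Type*} [Fintype ι] [Field 𝕜] [LinearOrder 𝕜]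
    [IsStrictOrderedRing 𝕜] (a : ι → 𝕜) {c : ι → 𝕜} (hc : ∀ i, 0 ≤ c i) (b : 𝕜) {d : 𝕜}
    (hd : 0 < d) {x : ι → 𝕜} (hx : ∀ i, x i = 0 ∨ x i = 1) :
    {t : 𝕜 | ∃ (y : 𝕜) (z : ι → 𝕜),
        (∀ i, z i - y ≤ 0 ∧ (c i + d) * z i ≤ x i ∧ d * (y - z i) ≤ 1 - x i) ∧
        (∑ i, c i * z i) + d * y = 1 ∧ (∀ i, 0 ≤ z i) ∧ 0 ≤ y ∧
        t = (∑ i, a i * z i) + b * y}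
      = {((∑ i, a i * x i) + b) / ((∑ i, c i * x i) + d)} := by
  calc
    _ = (fun p : 𝕜 × (ι → 𝕜) => a ⬝ᵥ p.2 + b * p.1) '' fractionalFeasibleSet c d x := by
      ext t
      simp only [Set.mem_ofPred_eq, Set.mem_image, Prod.exists, fractionalFeasibleSet,
        dotProduct, and_assoc, eq_comm (a := t)]
    _ = {(a ⬝ᵥ x + b) / (c ⬝ᵥ x + d)} := by
      rw [fractionalFeasibleSet.eq_singleton hc hd hx, Set.image_singleton, dotProduct_smul,
        smul_eq_mul, mul_comm, ← add_mul, div_eq_mul_inv]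

/-- The LP value-function extension of the fractional objective agrees with
`(aᵀx + b)/(cᵀx + d)` at every binary point `x ∈ {0,1}^n`. -/
theorem stmt17 (n : ℕ) (hn : 1 ≤ n) (a : Fin n → ℝ) (ha : ∀ i, 0 ≤ a i)
    (c : Fin n → ℝ) (hc : ∀ i, 0 ≤ c i) (b : ℝ) (d : ℝ) (hd : 0 < d) :
    ∀ x : Fin n → ℝ, (∀ i, x i = 0 ∨ x i = 1) →
      sInf {t : ℝ | ∃ (y : ℝ) (z : Fin n → ℝ),
          (∀ i, z i - y ≤ 0 ∧ (c i + d) * z i ≤ x i ∧ d * (y - z i) ≤ 1 - x i) ∧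
          (∑ i, c i * z i) + d * y = 1 ∧ (∀ i, 0 ≤ z i) ∧ 0 ≤ y ∧
          t = (∑ i, a i * z i) + b * y}
      = ((∑ i, a i * x i) + b) / ((∑ i, c i * x i) + d) := by
  intro x hx
  rw [stmt17_general a hc b hd hx, csInf_singleton]
end
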